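/- arXiv:2508.05272 — 2 statements merged into one kernel-verified Lean document; each statement's English description precedes it below -/
import Mathlib

section
/- Lévy gauge bound between augmented and non-augmented empirical cdfs: let F̂(t) = (1/(n+1)) Σ_{i=1}^{n+1} 1{C_n(t_i, D_{n+1}∖t_i) ≤ t} and Ĝ(t) = (1/n) Σ_{i=1}^n 1{C_{n−1}(t_i, T_n∖t_i) ≤ t}. Then for all δ ≥ 0 we have ld_δ(F̂, Ĝ) ≤ 1/(n+1) + (1/(n+1)) Σ_{i=1}^n 1{ |C_n(t_i, D_{n+1}∖t_i) − C_{n−1}(t_i, T_n∖t_i)| > δ }. -/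
open MeasureTheory Filter Set

noncomputable section

/-- The space of a single feature-response pair: response in `ℝ`, features in `ℝ^(p n)`. -/
abbrev Zn (p : ℕ → ℕ) (n : ℕ) : Type := ℝ × (Fin (p n) → ℝ)

/-- A conformity score family: measurable in both arguments and symmetric under permutations of
the second (tuple) argument. -/
structure IsScoreFamily (p : ℕ → ℕ)
    (C : (n m : ℕ) → Zn p n → (Fin m → Zn p n) → ℝ) : Prop where
  meas : ∀ n m, Measurable (fun q : Zn p n × (Fin m → Zn p n) => C n m q.1 q.2)
  symm : ∀ n m z (v : Fin m → Zn p n) (π : Equiv.Perm (Fin m)), C n m z (v ∘ π) = C n m z v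

/-- The Lévy gauge with tolerance parameter `δ` between two cdfs. -/
def levyGauge (F G : ℝ → ℝ) (δ : ℝ) : ℝ :=
  sInf {ε : ℝ | 0 ≤ ε ∧ ∀ t : ℝ, F (t - δ) - ε ≤ G t ∧ G t ≤ F (t + δ) + ε}

theorem levy_aux (n : ℕ) (a : Fin (n + 1) → ℝ) (b : Fin n → ℝ) (δ : ℝ) :
    levyGauge (fun s => (∑ i : Fin (n + 1), if a i ≤ s then (1 : ℝ) else 0) / (n + 1))
      (fun s => (∑ i : Fin n, if b i ≤ s then (1 : ℝ) else 0) / n) δ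
    ≤ 1 / (n + 1) + (1 / (n + 1)) * ∑ i : Fin n,
        if δ < |a i.castSucc - b i| then (1 : ℝ) else 0 := by
  have hn : (0 : ℝ) < n + 1 := by positivity
  have hK : 0 ≤ ∑ i : Fin n, if δ < |a i.castSucc - b i| then (1 : ℝ) else 0 :=
    Finset.sum_nonneg (fun i _ => by split_ifs <;> norm_num)
  refine csInf_le ⟨0, fun ε h => h.1⟩ ⟨by positivity, fun t => ?_⟩
  have h1 : (∑ i : Fin n, if a i.castSucc ≤ t - δ then (1 : ℝ) else 0) ≤
      (∑ i : Fin n, if b i ≤ t then (1 : ℝ) else 0) +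
      ∑ i : Fin n, if δ < |a i.castSucc - b i| then (1 : ℝ) else 0 := by
    rw [← Finset.sum_add_distrib]
    refine Finset.sum_le_sum (fun i _ => ?_)
    have := neg_abs_le (a i.castSucc - b i)
    split_ifs <;> linarith
  have h2 : (∑ i : Fin n, if b i ≤ t then (1 : ℝ) else 0) ≤
      (∑ i : Fin n, if a i.castSucc ≤ t + δ then (1 : ℝ) else 0) +
      ∑ i : Fin n, if δ < |a i.castSucc - b i| then (1 : ℝ) else 0 := by
    rw [← Finset.sum_add_distrib]
    refine Finset.sum_le_sum (fun i _ => ?_)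
    have := le_abs_self (a i.castSucc - b i)
    split_ifs <;> linarith
  have h3 : (∑ i : Fin n, if b i ≤ t then (1 : ℝ) else 0) ≤ n := by
    calc _ ≤ ∑ i : Fin n, (1 : ℝ) :=
          Finset.sum_le_sum (fun i _ => by split_ifs <;> norm_num)
      _ = n := by simp
  have h4 : 0 ≤ ∑ i : Fin n, if b i ≤ t then (1 : ℝ) else 0 :=
    Finset.sum_nonneg (fun i _ => by split_ifs <;> norm_num)
  have e : ∀ s, 0 ≤ (if a (Fin.last n) ≤ s then (1 : ℝ) else 0) ∧
      (if a (Fin.last n) ≤ s then (1 : ℝ) else 0) ≤ 1 := by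
    intro s; split_ifs <;> norm_num
  have e1 := (e (t - δ)).2
  have e2 := (e (t + δ)).1
  simp only [Fin.sum_univ_castSucc]
  generalize (∑ i : Fin n, if b i ≤ t then (1 : ℝ) else 0) = B at *
  generalize (∑ i : Fin n, if δ < |a i.castSucc - b i| then (1 : ℝ) else 0) = K at *
  generalize (∑ i : Fin n, if a i.castSucc ≤ t - δ then (1 : ℝ) else 0) = A1 at *
  generalize (∑ i : Fin n, if a i.castSucc ≤ t + δ then (1 : ℝ) else 0) = A2 at *
  generalize (if a (Fin.last n) ≤ t - δ then (1 : ℝ) else 0) = E1 at *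
  generalize (if a (Fin.last n) ≤ t + δ then (1 : ℝ) else 0) = E2 at *
  have g : B / (n + 1) ≤ B / n ∧ B / n ≤ (B + 1) / (n + 1) := by
    rcases Nat.eq_zero_or_pos n with h | h
    · subst h
      have : B = 0 := by
        have h3' : B ≤ 0 := by simpa using h3
        linarith
      subst this
      simp
    · have h' : (0 : ℝ) < n := by exact_mod_cast h
      constructor
      · exact div_le_div_of_nonneg_left h4 h' (by linarith)
      · rw [div_le_div_iff₀ h' hn]; nlinarith
  have r1 : (A1 + E1) / (n + 1) ≤ (B + (1 + K)) / (n + 1) := div_le_div_of_nonneg_right (by linarith) hn.le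
  have r2 : (B + 1) / (n + 1) ≤ (A2 + E2 + (1 + K)) / (n + 1) := div_le_div_of_nonneg_right (by linarith) hn.le
  have q : (1 : ℝ) / (n + 1) + 1 / (n + 1) * K = (1 + K) / (n + 1) := by ring
  rw [q]
  rw [add_div _ (1 + K)] at r1 r2
  constructor <;> linarith [g.1, g.2]

/-- Lévy gauge bound between augmented and non-augmented empirical cdfs: with
`F̂(t) = (1/(n+1)) Σ_{i=1}^{n+1} 1{C_n(t_i, D_{n+1}∖t_i) ≤ t}` and
`Ĝ(t) = (1/n) Σ_{i=1}^n 1{C_{n−1}(t_i, T_n∖t_i) ≤ t}`, for all `δ ≥ 0`,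
`ld_δ(F̂, Ĝ) ≤ 1/(n+1) + (1/(n+1)) Σ_{i=1}^n 1{|C_n(t_i, D_{n+1}∖t_i)
  − C_{n−1}(t_i, T_n∖t_i)| > δ}`. This is a deterministic statement, holding for every
realization `z 0, …, z n` of the `n+1` data points. -/
theorem levyGauge_Fhat_Ghat_bound
    (p : ℕ → ℕ) (n : ℕ) (z : ℕ → Zn p n)
    (C : (n m : ℕ) → Zn p n → (Fin m → Zn p n) → ℝ)
    (hC : IsScoreFamily p C)
    (δ : ℝ) (hδ : 0 ≤ δ) :
    levyGauge
      (fun s => (∑ i : Fin (n + 1),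
          if C n n (z (i : ℕ))
              (fun j : Fin n => if (j : ℕ) < (i : ℕ) then z (j : ℕ) else z ((j : ℕ) + 1)) ≤ s
          then (1 : ℝ) else 0) / (n + 1))
      (fun s => (∑ i : Fin n,
          if C n (n - 1) (z (i : ℕ))
              (fun j : Fin (n - 1) => if (j : ℕ) < (i : ℕ) then z (j : ℕ) else z ((j : ℕ) + 1))
            ≤ s
          then (1 : ℝ) else 0) / n)
      δ
    ≤ 1 / (n + 1) + (1 / (n + 1)) * ∑ i : Fin n,
        if δ < |C n n (z (i : ℕ))
              (fun j : Fin n => if (j : ℕ) < (i : ℕ) then z (j : ℕ) else z ((j : ℕ) + 1))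
            - C n (n - 1) (z (i : ℕ))
              (fun j : Fin (n - 1) =>
                if (j : ℕ) < (i : ℕ) then z (j : ℕ) else z ((j : ℕ) + 1))|
        then (1 : ℝ) else 0 := by
  exact levy_aux n
    (fun i => C n n (z (i : ℕ))
      (fun j : Fin n => if (j : ℕ) < (i : ℕ) then z (j : ℕ) else z ((j : ℕ) + 1)))
    (fun i => C n (n - 1) (z (i : ℕ))
      (fun j : Fin (n - 1) => if (j : ℕ) < (i : ℕ) then z (j : ℕ) else z ((j : ℕ) + 1))) δ
end
end

section
/- Sandwich lemma between cross-conformal and shortcut sets: fix training data T_n and a feature x_{n+1}. Then for all α ∈ ℝ, ε > 0, δ_1 ∈ ℝ and δ_2 > 0: PS^{cc}_{α+ε}(δ_1) ⊆ PS^{sc}_α(δ_1 + δ_2) ∪ Δ_n(ε, δ_2) and PS^{sc}_{α+ε}(δ_1) ⊆ PS^{cc}_α(δ_1 + δ_2) ∪ Δ_n(ε, δ_2), where Δ_n(ε, δ) = { y ∈ Y_n : Σ_{i=1}^n 1{ |C_n((y, x_{n+1}), T_n) − C_{n−1}((y, x_{n+1}), T_n∖t_i)| ≥ δ } > nε − 1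 }. -/
open MeasureTheory Filter Set

noncomputable section

/-- The `α`-quantile `Q_α(F) = inf {x : F x ≥ α}` of a cdf `F`, as an extended real
(with `inf ∅ = +∞`). -/
def quantile (F : ℝ → ℝ) (α : ℝ) : EReal :=
  sInf ((fun x : ℝ => (x : EReal)) '' {x : ℝ | α ≤ F x})

/-- The training data `T_n ∖ t_i` (0-based `i`) built from the fixed points `z 0, …, z (n-1)`. -/
def looPts (p : ℕ → ℕ) (n : ℕ) (z : ℕ → Zn p n) (i : ℕ) : Fin (n - 1) → Zn p n :=
  fun j => if (j : ℕ) < i then z (j : ℕ) else z ((j : ℕ) + 1)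

/-- The `δ`-distorted shortcut prediction set for fixed training data `z 0, …, z (n-1)` and
feature `x`. -/
def psSCPts (p : ℕ → ℕ) (Y : ℕ → Set ℝ) (n : ℕ) (z : ℕ → Zn p n) (x : Fin (p n) → ℝ)
    (C : (n m : ℕ) → Zn p n → (Fin m → Zn p n) → ℝ) (α δ : ℝ) : Set ℝ :=
  {y | y ∈ Y n ∧
    (C n n (y, x) (fun i : Fin n => z (i : ℕ)) : EReal)
      ≤ quantile
          (fun s => (∑ i : Fin n,
            if C n (n - 1) (z (i : ℕ)) (looPts p n z (i : ℕ)) ≤ s then (1 : ℝ) else 0) / n)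
          (1 - α) + (δ : EReal)}

/-- The `δ`-inflated `n`-fold cross-conformal prediction set for fixed training data
`z 0, …, z (n-1)` and feature `x`. -/
def psCCPts (p : ℕ → ℕ) (Y : ℕ → Set ℝ) (n : ℕ) (z : ℕ → Zn p n) (x : Fin (p n) → ℝ)
    (C : (n m : ℕ) → Zn p n → (Fin m → Zn p n) → ℝ) (α δ : ℝ) : Set ℝ :=
  {y | y ∈ Y n ∧ α * (n + 1) <
    1 + ∑ i : Fin n,
      if C n (n - 1) (y, x) (looPts p n z (i : ℕ))
          ≤ C n (n - 1) (z (i : ℕ)) (looPts p n z (i : ℕ)) + δ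
      then (1 : ℝ) else 0}

/-- The exceptional set `Δ_n(ε, δ)`. -/
def deltaPts (p : ℕ → ℕ) (Y : ℕ → Set ℝ) (n : ℕ) (z : ℕ → Zn p n) (x : Fin (p n) → ℝ)
    (C : (n m : ℕ) → Zn p n → (Fin m → Zn p n) → ℝ) (ε δ : ℝ) : Set ℝ :=
  {y | y ∈ Y n ∧ (n : ℝ) * ε - 1 <
    ∑ i : Fin n,
      if δ ≤ |C n n (y, x) (fun i' : Fin n => z (i' : ℕ))
          - C n (n - 1) (y, x) (looPts p n z (i : ℕ))|
      then (1 : ℝ) else 0}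

lemma aux_le_quantile (F : ℝ → ℝ) (a c d : ℝ) :
    (c : EReal) ≤ quantile F a + (d : EReal) ↔ ∀ s, a ≤ F s → c ≤ s + d := by
  unfold quantile
  constructor
  · intro h s hs
    have h1 : sInf ((fun x : ℝ => (x : EReal)) '' {x : ℝ | a ≤ F x}) ≤ (s : EReal) :=
      sInf_le ⟨s, hs, rfl⟩
    have h2 : (c : EReal) ≤ (s : EReal) + (d : EReal) := h.trans (by gcongr)
    exact_mod_cast h2
  · intro h
    have h1 : ((c - d : ℝ) : EReal) ≤ sInf ((fun x : ℝ => (x : EReal)) '' {x : ℝ | a ≤ F x}) := by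
      apply le_sInf
      rintro _ ⟨s, hs, rfl⟩
      have := h s hs
      exact EReal.coe_le_coe_iff.2 (by linarith)
    have h2 : (c : EReal) = ((c - d : ℝ) : EReal) + (d : EReal) := by
      rw [← EReal.coe_add]; congr 1; ring
    rw [h2]
    gcongr

lemma aux_pos (n : ℕ) (D : Fin n → ℝ) (ε : ℝ) (h : ∑ i, D i ≤ n * ε - 1) : 0 < (n : ℝ) := by
  rcases Nat.eq_zero_or_pos n with rfl | h0
  · simp at h; linarith
  · exact_mod_cast h0

lemma aux_one (n : ℕ) (r k : Fin n → ℝ) (c α ε δ₁ δ₂ : ℝ) (hε : 0 < ε)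
    (h1 : (α + ε) * (n + 1) < 1 + ∑ i, if k i ≤ r i + δ₁ then (1 : ℝ) else 0)
    (hD : (∑ i, if δ₂ ≤ |c - k i| then (1 : ℝ) else 0) ≤ n * ε - 1)
    (s : ℝ) (hs : 1 - α ≤ (∑ i, if r i ≤ s then (1 : ℝ) else 0) / n) : c ≤ s + (δ₁ + δ₂) := by
  have hn := aux_pos n _ ε hD
  rw [le_div_iff₀ hn] at hs
  by_contra! hc
  have hsum : (∑ i, if k i ≤ r i + δ₁ then (1 : ℝ) else 0) + (∑ i, if r i ≤ s then (1 : ℝ) else 0)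
      ≤ ∑ i : Fin n, ((1 : ℝ) + if δ₂ ≤ |c - k i| then (1 : ℝ) else 0) := by
    rw [← Finset.sum_add_distrib]
    apply Finset.sum_le_sum
    intro i _
    split_ifs with a b d <;> try norm_num
    have := (abs_lt.1 (not_le.1 d)).2
    linarith
  have hle : (∑ i, if r i ≤ s then (1 : ℝ) else 0) ≤ ∑ i : Fin n, (1 : ℝ) := by
    apply Finset.sum_le_sum
    intro i _
    split_ifs <;> norm_num
  rw [Finset.sum_add_distrib] at hsum
  simp only [Finset.sum_const, Finset.card_univ, Fintype.card_fin, nsmul_eq_mul, mul_one]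
    at hsum hle
  have hα : 0 ≤ α := by
    by_contra! h
    nlinarith
  nlinarith

lemma aux_two (n : ℕ) (r k : Fin n → ℝ) (c α ε δ₁ δ₂ : ℝ) (hε : 0 < ε)
    (hD : (∑ i, if δ₂ ≤ |c - k i| then (1 : ℝ) else 0) ≤ n * ε - 1)
    (hs : ∀ s, 1 - (α + ε) ≤ (∑ i, if r i ≤ s then (1 : ℝ) else 0) / n → c ≤ s + δ₁) :
    α * (n + 1) < 1 + ∑ i, if k i ≤ r i + (δ₁ + δ₂) then (1 : ℝ) else 0 := by
  have hn := aux_pos n _ ε hD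
  obtain ⟨s, hsc, hsr⟩ : ∃ s, s < c - δ₁ ∧ ∀ i, r i < c - δ₁ → r i ≤ s := by
    have h1 : ∀ᶠ s in nhdsWithin (c - δ₁) (Iio (c - δ₁)), ∀ i, r i < c - δ₁ → r i ≤ s := by
      rw [eventually_all]
      intro i
      by_cases h : r i < c - δ₁
      · filter_upwards [Ioo_mem_nhdsLT h] with s hs _ using hs.1.le
      · exact Eventually.of_forall fun s h' => absurd h' h
    exact (eventually_mem_nhdsWithin.and h1).exists
  have hF : (∑ i, if r i ≤ s then (1 : ℝ) else 0) / n < 1 - (α + ε) := by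
    by_contra! h
    have := hs s h
    linarith
  rw [div_lt_iff₀ hn] at hF
  have hsum : ∑ i : Fin n, (1 : ℝ) ≤ (∑ i, if k i ≤ r i + (δ₁ + δ₂) then (1 : ℝ) else 0)
      + (∑ i, if r i ≤ s then (1 : ℝ) else 0) + ∑ i, if δ₂ ≤ |c - k i| then (1 : ℝ) else 0 := by
    rw [← Finset.sum_add_distrib, ← Finset.sum_add_distrib]
    apply Finset.sum_le_sum
    intro i _
    split_ifs with a b d d b d d <;> try norm_num
    have := (abs_lt.1 (not_le.1 d)).1
    have h2 : c - δ₁ ≤ r i := by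
      by_contra! h
      exact b (hsr i h)
    linarith
  have hge : 0 ≤ (∑ i, if r i ≤ s then (1 : ℝ) else 0) := by
    apply Finset.sum_nonneg
    intro i _
    split_ifs <;> norm_num
  simp only [Finset.sum_const, Finset.card_univ, Fintype.card_fin, nsmul_eq_mul, mul_one] at hsum
  have hα : α + ε < 1 := by
    by_contra! h
    nlinarith
  nlinarith

/-- sandwich lemma between cross-conformal and shortcut sets: for fixed
training data and feature vector, for all `α ∈ ℝ`, `ε > 0`, `δ₁ ∈ ℝ` and `δ₂ > 0`:
`PS^{cc}_{α+ε}(δ₁) ⊆ PS^{sc}_α(δ₁ + δ₂) ∪ Δ_n(ε, δ₂)` and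
`PS^{sc}_{α+ε}(δ₁) ⊆ PS^{cc}_α(δ₁ + δ₂) ∪ Δ_n(ε, δ₂)`. -/
theorem crossConformal_shortcut_sandwich
    (p : ℕ → ℕ) (Y : ℕ → Set ℝ) (n : ℕ) (z : ℕ → Zn p n) (x : Fin (p n) → ℝ)
    (C : (n m : ℕ) → Zn p n → (Fin m → Zn p n) → ℝ)
    (hC : IsScoreFamily p C)
    (α : ℝ) (ε : ℝ) (hε : 0 < ε) (δ₁ : ℝ) (δ₂ : ℝ) (hδ₂ : 0 < δ₂) :
    psCCPts p Y n z x C (α + ε) δ₁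
        ⊆ psSCPts p Y n z x C α (δ₁ + δ₂) ∪ deltaPts p Y n z x C ε δ₂
    ∧ psSCPts p Y n z x C (α + ε) δ₁
        ⊆ psCCPts p Y n z x C α (δ₁ + δ₂) ∪ deltaPts p Y n z x C ε δ₂ := by
  constructor
  · rintro y ⟨hy, h⟩
    by_cases hD : y ∈ deltaPts p Y n z x C ε δ₂
    · exact Or.inr hD
    · refine Or.inl ⟨hy, ?_⟩
      have hD' := not_lt.1 fun h' => hD ⟨hy, h'⟩
      rw [aux_le_quantile]
      exact aux_one n _ _ _ α ε δ₁ δ₂ hε h hD'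
  · rintro y ⟨hy, h⟩
    by_cases hD : y ∈ deltaPts p Y n z x C ε δ₂
    · exact Or.inr hD
    · refine Or.inl ⟨hy, ?_⟩
      have hD' := not_lt.1 fun h' => hD ⟨hy, h'⟩
      rw [aux_le_quantile] at h
      exact aux_two n _ _ _ α ε δ₁ δ₂ hε hD' h
end
end
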